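/- Let α ≥ 1 be real, let n ≥ 2 be a natural number, and let x satisfy −1 < x < −(2α+3)/(2α+5). Then P̃_n^{(α,−1/2)}(x) > P̃₁^{(α,−1/2)}(x). -/

import Mathlib

open Finset

/-- The generalized binomial coefficient `binom(a, k) = a(a-1)⋯(a-k+1)/k!` for real `a`. -/
noncomputable def genBinom (a : ℝ) (k : ℕ) : ℝ :=
  (∏ i ∈ Finset.range k, (a - i)) / (Nat.factorial k)

/-- The Jacobi polynomial
`P_n^{(α,β)}(x) = Σ_{s=0}^n binom(n+α, n-s)·binom(n+β, s)·((x-1)/2)^s·((x+1)/2)^{n-s}`. -/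
noncomputable def jacobiP (n : ℕ) (α β x : ℝ) : ℝ :=
  ∑ s ∈ Finset.range (n + 1),
    genBinom (n + α) (n - s) * genBinom (n + β) s * ((x - 1) / 2) ^ s * ((x + 1) / 2) ^ (n - s)

/-- The normalized Jacobi polynomial `P̃_n^{(α,β)}(x) = P_n^{(α,β)}(x) / P_n^{(α,β)}(1)`. -/
noncomputable def jacobiPt (n : ℕ) (α β x : ℝ) : ℝ :=
  jacobiP n α β x / jacobiP n α β 1

noncomputable def mom (α : ℝ) (k : ℕ) : ℝ := ∏ i ∈ Finset.range k, ((i + 1/2 : ℝ) / (α + 1 + i))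

lemma mom_succ (α : ℝ) (k : ℕ) : mom α (k+1) = mom α k * ((k + 1/2 : ℝ) / (α + 1 + k)) := by
  unfold mom; rw [Finset.prod_range_succ]

lemma genBinom_succ (a : ℝ) (k : ℕ) : genBinom a (k+1) = genBinom a k * ((a - k) / (k+1)) := by
  unfold genBinom
  rw [Finset.prod_range_succ, Nat.factorial_succ]
  push_cast
  have : (Nat.factorial k : ℝ) ≠ 0 := by positivity
  field_simp

lemma genBinom_pos (a : ℝ) (k : ℕ) (h : (k : ℝ) < a + 1) : 0 < genBinom a k := by
  unfold genBinom
  apply div_pos _ (by positivity)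
  apply Finset.prod_pos
  intro i hi
  have : i + 1 ≤ k := Finset.mem_range.mp hi
  have : (i : ℝ) + 1 ≤ k := by exact_mod_cast this
  linarith

lemma jacobiP_one (n : ℕ) (α β : ℝ) : jacobiP n α β 1 = genBinom (n + α) n := by
  unfold jacobiP
  rw [Finset.sum_eq_single 0]
  · simp [genBinom]
  · intro b _ hb
    simp [hb]
  · simp

lemma choose_two_step (n s : ℕ) (h : s < n) :
    ((2*n).choose (2*(s+1)) : ℝ) * ((2*s+1) * (2*s+2)) =
      ((2*n).choose (2*s)) * ((2*n-2*s) * (2*n-2*s-1)) := by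
  have h1 := Nat.choose_succ_right_eq (2*n) (2*s)
  have h2 := Nat.choose_succ_right_eq (2*n) (2*s+1)
  obtain ⟨m, rfl⟩ : ∃ m, n = s + 1 + m := ⟨n - s - 1, by omega⟩
  rw [show 2*(s+1+m) - 2*s = 2*m+2 by omega] at h1
  rw [show 2*(s+1+m) - (2*s+1) = 2*m+1 by omega] at h2
  have h1' := congrArg (Nat.cast : ℕ → ℝ) h1
  have h2' := congrArg (Nat.cast : ℕ → ℝ) h2
  push_cast at h1' h2' ⊢
  rw [show 2*(s+1) = 2*s+1+1 by ring]
  linear_combination (2*(s:ℝ)+1) * h2' + (2*(m:ℝ)+1) * h1'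

lemma coef_eq (n : ℕ) (α : ℝ) (hα : 1 ≤ α) (s : ℕ) (hs : s ≤ n) :
    genBinom (n + α) (n - s) * genBinom (n + (-1/2)) s =
      genBinom (n + α) n * (((2*n).choose (2*s) : ℝ) * mom α s) := by
  induction s with
  | zero => simp [genBinom, mom]
  | succ s ih =>
    have ih := ih (by omega)
    have hc := choose_two_step n s (by omega)
    obtain ⟨m, rfl⟩ : ∃ m, n = s + 1 + m := ⟨n - s - 1, by omega⟩
    rw [show s+1+m - s = m + 1 by omega, genBinom_succ] at ih
    rw [show s+1+m - (s+1) = m by omega, genBinom_succ, mom_succ]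
    generalize genBinom (((s+1+m : ℕ):ℝ) + α) m = A at *
    generalize genBinom (((s+1+m : ℕ):ℝ) + (-1/2)) s = B at *
    generalize genBinom (((s+1+m : ℕ):ℝ) + α) (s+1+m) = C at *
    generalize mom α s = D at *
    generalize (((2*(s+1+m)).choose (2*(s+1)) : ℕ) : ℝ) = E at *
    generalize (((2*(s+1+m)).choose (2*s) : ℕ) : ℝ) = F at *
    push_cast at *
    have hp : α + 1 + s ≠ 0 := by positivity
    have hm : (m:ℝ) + 1 ≠ 0 := by positivity
    have hs : (s:ℝ) + 1 ≠ 0 := by positivity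
    have hE : E = F * ((2*m+2) * (2*m+1)) / ((2*s+1)*(2*s+2)) := by
      have : (2*(s:ℝ)+1)*(2*s+2) ≠ 0 := by positivity
      rw [eq_div_iff this, hc]; ring
    have hAB : A * B = C * (F * D) * (m+1) / (α + 1 + s) := by
      rw [← ih]; field_simp; ring
    have : (2*(s:ℝ)+1) ≠ 0 := by positivity
    rw [← mul_assoc, hAB, hE]
    field_simp
    ring

lemma jacobiPt_eq (n : ℕ) (α : ℝ) (hα : 1 ≤ α) (y : ℝ) :
    jacobiPt n α (-1/2) (2*y-1) = ∑ k ∈ Finset.range (n+1),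
      (((2*n).choose (2*k) : ℝ) * (-1)^k * (1-y)^k * y^(n-k)) * mom α k := by
  unfold jacobiPt
  rw [jacobiP_one]
  have hC : genBinom (n + α) n ≠ 0 := (genBinom_pos _ _ (by linarith)).ne'
  rw [div_eq_iff hC]
  unfold jacobiP
  rw [Finset.sum_mul]
  apply Finset.sum_congr rfl
  intro k hk
  rw [coef_eq n α hα k (by simpa [Nat.lt_succ_iff] using hk)]
  rw [show (2*y-1-1)/2 = (-1)*(1-y) by ring, show (2*y-1+1)/2 = y by ring, mul_pow]
  ring

lemma sum_even_odd (n : ℕ) (f : ℕ → ℝ) : ∑ j ∈ Finset.range (2*n+1), f j =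
    ∑ k ∈ Finset.range (n+1), f (2*k) + ∑ k ∈ Finset.range n, f (2*k+1) := by
  induction n with
  | zero => simp
  | succ n ih =>
    rw [show 2*(n+1)+1 = 2*n+1+1+1 by ring, Finset.sum_range_succ, Finset.sum_range_succ, ih,
      Finset.sum_range_succ (fun k => f (2*k)) (n+1), Finset.sum_range_succ (fun k => f (2*k+1)) n]
    rw [show 2*(n+1) = 2*n+1+1 by ring]
    ring

lemma abs_R_le (n : ℕ) (y s : ℝ) (h0 : 0 ≤ y) (h1 : y ≤ 1) :
    |∑ k ∈ Finset.range (n+1),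
      (((2*n).choose (2*k) : ℝ) * (-1)^k * (1-y)^k * y^(n-k)) * (s^2)^k| ≤
      (y + (1-y)*s^2)^n := by
  set t := Real.sqrt y with ht
  set u := Real.sqrt (1-y) * s with hu
  have ht2 : t^2 = y := Real.sq_sqrt h0
  have hu2 : u^2 = (1-y)*s^2 := by rw [hu, mul_pow, Real.sq_sqrt (by linarith)]
  have key : (((u:ℂ) * Complex.I + (t:ℂ))^(2*n)).re = ∑ k ∈ Finset.range (n+1),
      (((2*n).choose (2*k) : ℝ) * (-1)^k * (1-y)^k * y^(n-k)) * (s^2)^k := by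
    rw [add_pow, Complex.re_sum, sum_even_odd]
    have hodd : ∑ k ∈ Finset.range n, (((u:ℂ) * Complex.I)^(2*k+1) * (t:ℂ)^(2*n-(2*k+1)) *
        ((2*n).choose (2*k+1) : ℂ)).re = 0 := by
      apply Finset.sum_eq_zero
      intro k _
      have : ((u:ℂ) * Complex.I)^(2*k+1) * (t:ℂ)^(2*n-(2*k+1)) *
        ((2*n).choose (2*k+1) : ℂ) = ((u^(2*k+1) * (-1)^k * t^(2*n-(2*k+1)) *
        ((2*n).choose (2*k+1) : ℝ) : ℝ) : ℂ) * Complex.I := by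
        rw [mul_pow, pow_succ Complex.I, pow_mul Complex.I, Complex.I_sq]
        push_cast; ring
      rw [this, Complex.re_ofReal_mul]; simp
    rw [hodd, add_zero]
    apply Finset.sum_congr rfl
    intro k hk
    have : ((u:ℂ) * Complex.I)^(2*k) * (t:ℂ)^(2*n-2*k) *
        ((2*n).choose (2*k) : ℂ) = (((u^2)^k * (-1)^k * (t^2)^(n-k) *
        ((2*n).choose (2*k) : ℝ) : ℝ) : ℂ) := by
      rw [mul_pow, pow_mul Complex.I, Complex.I_sq, show 2*n-2*k = 2*(n-k) by omega, pow_mul, pow_mul]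
      push_cast; ring
    rw [this, Complex.ofReal_re, ht2, hu2, mul_pow]; ring
  rw [← key]
  refine (Complex.abs_re_le_norm _).trans ?_
  rw [norm_pow, pow_mul, Complex.sq_norm, Complex.normSq_apply]
  simp only [Complex.add_re, Complex.add_im, Complex.mul_re, Complex.mul_im, Complex.ofReal_re,
    Complex.ofReal_im, Complex.I_re, Complex.I_im]
  apply le_of_eq
  congr 1
  rw [← ht2, ← ht2] at *
  nlinarith [ht2, hu2]

open MeasureTheory intervalIntegral

noncomputable def wt (α s : ℝ) : ℝ := (1 - s^2) ^ (α - 1/2)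

lemma wt_cont (α : ℝ) (hα : 1 ≤ α) : Continuous (wt α) := by
  unfold wt
  exact (by fun_prop : Continuous fun s : ℝ => 1 - s^2).rpow_const (fun _ => Or.inr (by linarith))

lemma wt_nonneg (α s : ℝ) (h0 : 0 ≤ s) (h1 : s ≤ 1) : 0 ≤ wt α s :=
  Real.rpow_nonneg (by nlinarith) _

noncomputable def II (α : ℝ) (k : ℕ) : ℝ := ∫ s in (0:ℝ)..1, wt α s * (s^2)^k

lemma II_zero_pos (α : ℝ) (hα : 1 ≤ α) : 0 < II α 0 := by
  unfold II
  apply intervalIntegral_pos_of_pos_on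
  · have := wt_cont α hα
    exact Continuous.intervalIntegrable (by fun_prop) _ _
  · intro s hs
    have : 0 < wt α s := Real.rpow_pos_of_pos (by nlinarith [hs.1, hs.2]) _
    simpa using this
  · norm_num

lemma II_succ (α : ℝ) (hα : 1 ≤ α) (k : ℕ) :
    II α (k+1) = II α k * ((k + 1/2 : ℝ) / (α + 1 + k)) := by
  have hw := wt_cont α hα
  have hd : ∀ s ∈ Set.uIcc (0:ℝ) 1, HasDerivAt (fun s : ℝ => s^(2*k+1) * (1-s^2)^(α+1/2))
      ((2*k+1) * (wt α s * (s^2)^k) - (2*k+2*α+2) * (wt α s * (s^2)^(k+1))) s := by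
    intro s hs
    rw [Set.uIcc_of_le zero_le_one] at hs
    have h1 : HasDerivAt (fun s : ℝ => 1 - s^2) (-(2*s)) s := by
      simpa using ((hasDerivAt_pow 2 s).const_sub 1)
    have h2 := h1.rpow_const (p := α + 1/2) (Or.inr (by linarith))
    have h3 := (hasDerivAt_pow (2*k+1) s).mul h2
    refine h3.congr_deriv ?_
    symm
    have e : (1 - s^2)^(α+1/2) = (1-s^2) * wt α s := by
      unfold wt
      rw [show α + 1/2 = 1 + (α - 1/2) by ring,
        Real.rpow_add' (by nlinarith [hs.1, hs.2]) (by linarith), Real.rpow_one]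
    rw [e, show α + 1/2 - 1 = α - 1/2 by ring]
    change _ = _ + _ * (_ * _ * wt α s)
    simp only [Nat.add_sub_cancel]
    push_cast
    ring
  have hi := integral_eq_sub_of_hasDerivAt hd
    (Continuous.intervalIntegrable (by fun_prop) _ _)
  rw [intervalIntegral.integral_sub (Continuous.intervalIntegrable (by fun_prop) _ _)
    (Continuous.intervalIntegrable (by fun_prop) _ _), intervalIntegral.integral_const_mul,
    intervalIntegral.integral_const_mul] at hi
  have hz : (0:ℝ)^(α+1/2) = 0 := Real.zero_rpow (by linarith)
  norm_num at hi
  norm_num at hz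
  rw [hz] at hi
  unfold II
  have hp : α + 1 + k ≠ 0 := by positivity
  rw [mul_div_assoc', eq_div_iff hp]
  linarith

lemma II_eq (α : ℝ) (hα : 1 ≤ α) (k : ℕ) : II α k = II α 0 * mom α k := by
  induction k with
  | zero => simp [mom]
  | succ k ih => rw [II_succ α hα, ih, mom_succ]; ring

lemma int_sum (α : ℝ) (hα : 1 ≤ α) (N : ℕ) (c : ℕ → ℝ) :
    ∫ s in (0:ℝ)..1, wt α s * ∑ k ∈ Finset.range N, c k * (s^2)^k =
      II α 0 * ∑ k ∈ Finset.range N, c k * mom α k := by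
  have hw := wt_cont α hα
  simp_rw [Finset.mul_sum]
  rw [intervalIntegral.integral_finsetSum
    (fun i _ => Continuous.intervalIntegrable (by fun_prop) _ _)]
  apply Finset.sum_congr rfl
  intro k _
  rw [← mul_assoc, mul_comm (II α 0), mul_assoc, ← II_eq α hα]
  unfold II
  rw [← intervalIntegral.integral_const_mul]
  congr 1; ext s; ring

lemma big_bound (α : ℝ) (hα : 1 ≤ α) (n : ℕ) (hn : 5 ≤ n) (y y0 : ℝ) (h0 : 0 ≤ y) (h1 : y ≤ y0)
    (h2 : y0 ≤ 1) :
    -(∑ k ∈ Finset.range 6, ((Nat.choose 5 k : ℝ) * (1-y0)^k * y0^(5-k)) * mom α k) ≤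
    ∑ k ∈ Finset.range (n+1),
      (((2*n).choose (2*k) : ℝ) * (-1)^k * (1-y)^k * y^(n-k)) * mom α k := by
  have hw := wt_cont α hα
  have hI := II_zero_pos α hα
  refine le_of_mul_le_mul_left ?_ hI
  rw [mul_neg, ← int_sum α hα, ← int_sum α hα, ← intervalIntegral.integral_neg]
  apply intervalIntegral.integral_mono_on zero_le_one
    (Continuous.intervalIntegrable (by fun_prop) _ _)
    (Continuous.intervalIntegrable (by fun_prop) _ _)
  intro s hs
  rw [← mul_neg]
  apply mul_le_mul_of_nonneg_left _ (wt_nonneg α s hs.1 hs.2)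
  have hs2 : s^2 ≤ 1 := by nlinarith [hs.1, hs.2]
  have hb := abs_R_le n y s h0 (h1.trans h2)
  have hr0 : 0 ≤ y + (1-y)*s^2 := by nlinarith [sq_nonneg s, mul_nonneg (sub_nonneg.2 (h1.trans h2)) (sq_nonneg s)]
  have hr1 : y + (1-y)*s^2 ≤ y0 + (1-y0)*s^2 := by nlinarith
  have hr2 : y + (1-y)*s^2 ≤ 1 := by nlinarith
  have hc : (y + (1-y)*s^2)^n ≤ (y0 + (1-y0)*s^2)^5 :=
    (pow_le_pow_of_le_one hr0 hr2 hn).trans (pow_le_pow_left₀ hr0 hr1 5)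
  have he : (y0 + (1-y0)*s^2)^5 = ∑ k ∈ Finset.range 6,
      ((Nat.choose 5 k : ℝ) * (1-y0)^k * y0^(5-k)) * (s^2)^k := by
    rw [add_comm, add_pow]
    apply Finset.sum_congr rfl
    intro k _
    rw [mul_pow]; ring
  rw [← he]
  linarith [neg_abs_le (∑ k ∈ Finset.range (n+1),
      (((2*n).choose (2*k) : ℝ) * (-1)^k * (1-y)^k * y^(n-k)) * (s^2)^k)]

lemma jacobiPt_one_eq (α : ℝ) (hα : 1 ≤ α) (y : ℝ) :
    jacobiPt 1 α (-1/2) (2*y-1) = ((2*α+3)*y - 1)/(2*α+2) := by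
  rw [jacobiPt_eq 1 α hα]
  have : α + 1 ≠ 0 := by positivity
  simp [Finset.sum_range_succ, mom]
  field_simp
  ring

lemma case_two (α : ℝ) (hα : 1 ≤ α) (y : ℝ) (h0 : 0 < y) (h1 : y * (2*α+5) < 1) :
    jacobiPt 1 α (-1/2) (2*y-1) < jacobiPt 2 α (-1/2) (2*y-1) := by
  have key : jacobiPt 2 α (-1/2) (2*y-1) - jacobiPt 1 α (-1/2) (2*y-1) =
      (2*α+7) * ((1 - y*(2*α+5)) * (1-y)) / ((2*α+2)*(2*α+4)) := by
    rw [jacobiPt_one_eq α hα, jacobiPt_eq _ α hα]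
    have : α + 1 ≠ 0 := by positivity
    have : α + 1 + 1 ≠ 0 := by positivity
    have : α + 2 ≠ 0 := by positivity
    simp [Finset.sum_range_succ, mom, Finset.prod_range_succ, Nat.choose]
    field_simp
    ring
  have hy : y < 1 := by nlinarith
  have : 0 < 1 - y := by linarith
  have : 0 < 1 - y*(2*α+5) := by linarith
  have : 0 < (2*α+7) * ((1 - y*(2*α+5)) * (1-y)) / ((2*α+2)*(2*α+4)) := by positivity
  linarith

lemma case_three (α : ℝ) (hα : 1 ≤ α) (y : ℝ) (h0 : 0 < y) (h1 : y * (2*α+5) < 1) :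
    jacobiPt 1 α (-1/2) (2*y-1) < jacobiPt 3 α (-1/2) (2*y-1) := by
  have key : jacobiPt 3 α (-1/2) (2*y-1) - jacobiPt 1 α (-1/2) (2*y-1) =
      (2*α+9) * ((1-y) * ((2*α+1) + (2*α+7)*(4-2*α)*y - (2*α+7)*(2*α+11)*y^2))
        / ((2*α+2)*(2*α+4)*(2*α+6)) := by
    rw [jacobiPt_one_eq α hα, jacobiPt_eq _ α hα]
    have : α + 1 ≠ 0 := by positivity
    have : α + 1 + 1 ≠ 0 := by positivity
    have : α + 1 + 2 ≠ 0 := by positivity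
    have : α + 2 ≠ 0 := by positivity
    have : α + 3 ≠ 0 := by positivity
    simp [Finset.sum_range_succ, mom, Finset.prod_range_succ, Nat.choose]
    field_simp
    ring
  have hy : y < 1 := by nlinarith
  have : 0 < 1 - y := by linarith
  have hq : 0 < (2*α+1) + (2*α+7)*(4-2*α)*y - (2*α+7)*(2*α+11)*y^2 := by
    set z := y * (2*α+5) with hz
    have hz0 : 0 < z := by positivity
    have hyz : y = z / (2*α+5) := by rw [hz]; field_simp
    have : (2*α+1) + (2*α+7)*(4-2*α)*y - (2*α+7)*(2*α+11)*y^2 =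
      ((2*α+1)*(2*α+5)^2*(1-z) + (8*α^2+60*α+88) * z + (2*α+7)*(2*α+11)*(z*(1-z)))/(2*α+5)^2 := by
      rw [hyz]; field_simp; ring
    rw [this]
    have : 0 < 1 - z := by linarith
    positivity
  have : 0 < (2*α+9) * ((1-y) * ((2*α+1) + (2*α+7)*(4-2*α)*y - (2*α+7)*(2*α+11)*y^2))
        / ((2*α+2)*(2*α+4)*(2*α+6)) := by positivity
  linarith

lemma case_four (α : ℝ) (hα : 1 ≤ α) (y : ℝ) (h0 : 0 < y) (h1 : y * (2*α+5) < 1) :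
    jacobiPt 1 α (-1/2) (2*y-1) < jacobiPt 4 α (-1/2) (2*y-1) := by
  obtain ⟨b, hb, rfl⟩ : ∃ b : ℝ, 0 ≤ b ∧ α = b + 1 := ⟨α - 1, by linarith, by ring⟩
  obtain ⟨d, hd⟩ : ∃ d : ℝ, d = 2*b+5 := ⟨_, rfl⟩
  have key : jacobiPt 4 (b+1) (-1/2) (2*y-1) - jacobiPt 1 (b+1) (-1/2) (2*y-1) =
      (d+8) * ((1-y) * ((d^2+d+15) - (d+6)*(d^2-6*d+50)*y + (d+6)*(d+10)*(16-d)*y^2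
        - (d+6)*(d+10)*(d+12)*y^3))
        / ((d-1)*(d+1)*(d+3)*(d+5)) := by
    rw [jacobiPt_one_eq _ hα, jacobiPt_eq _ _ hα]
    subst hd
    have : b + 1 + 1 ≠ 0 := by positivity
    have : b + 1 + 1 + 1 ≠ 0 := by positivity
    have : b + 1 + 1 + 2 ≠ 0 := by positivity
    have : b + 1 + 1 + 3 ≠ 0 := by positivity
    have : b + 2 ≠ 0 := by positivity
    have : b + 3 ≠ 0 := by positivity
    have : b + 4 ≠ 0 := by positivity
    have : b + 5 ≠ 0 := by positivity
    have : 2*b+5-1 ≠ 0 := by linarith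
    simp [Finset.sum_range_succ, mom, Finset.prod_range_succ, Nat.choose]
    field_simp
    ring
  have hy : y < 1 := by nlinarith
  have : 0 < 1 - y := by linarith
  have hq : 0 < (d^2+d+15) - (d+6)*(d^2-6*d+50)*y + (d+6)*(d+10)*(16-d)*y^2
        - (d+6)*(d+10)*(d+12)*y^3 := by
    have hd0 : 0 < d + 2 := by linarith
    set z := y * (d+2) with hz
    have hz0 : 0 < z := by positivity
    have hyz : y = z / (d+2) := by rw [hz]; field_simp
    have hz1 : 0 < 1 - z := by rw [hz, hd]; linarith
    obtain ⟨A, hA⟩ : ∃ A, A = (d+2)^3*(d^2+d+15) := ⟨_, rfl⟩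
    obtain ⟨B, hB⟩ : ∃ B, B = -((d+2)^2*((d+6)*(d^2-6*d+50))) := ⟨_, rfl⟩
    obtain ⟨C, hC⟩ : ∃ C, C = (d+2)*((d+6)*(d+10)*(16-d)) := ⟨_, rfl⟩
    obtain ⟨D, hD⟩ : ∃ D, D = -((d+6)*(d+10)*(d+12)) := ⟨_, rfl⟩
    have e : (d^2+d+15) - (d+6)*(d^2-6*d+50)*y + (d+6)*(d+10)*(16-d)*y^2
        - (d+6)*(d+10)*(d+12)*y^3 =
      (A*(1-z)^3 + (3*A+B)*((1-z)^2*z) + (3*A+2*B+C)*((1-z)*z^2) + (A+B+C+D)*z^3)/(d+2)^3 := by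
      rw [hyz, hA, hB, hC, hD]; field_simp; ring
    have pA : 0 < A := by rw [hA, hd]; positivity
    have p1 : 0 < 3*A+B := by rw [hA, hB, hd]; ring_nf; positivity
    have p2 : 0 < 3*A+2*B+C := by rw [hA, hB, hC, hd]; ring_nf; positivity
    have p3 : 0 < A+B+C+D := by rw [hA, hB, hC, hD, hd]; ring_nf; positivity
    rw [e]
    positivity
  have : 0 < (d+8) * ((1-y) * ((d^2+d+15) - (d+6)*(d^2-6*d+50)*y + (d+6)*(d+10)*(16-d)*y^2
        - (d+6)*(d+10)*(d+12)*y^3))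
        / ((d-1)*(d+1)*(d+3)*(d+5)) := by
    have : 0 < d - 1 := by linarith
    have : 0 < d := by linarith
    positivity
  linarith

lemma case_big (α : ℝ) (hα : 1 ≤ α) (n : ℕ) (hn : 5 ≤ n) (y : ℝ) (h0 : 0 < y)
    (h1 : y * (2*α+5) < 1) :
    jacobiPt 1 α (-1/2) (2*y-1) < jacobiPt n α (-1/2) (2*y-1) := by
  have hp : 0 < 2*α+5 := by linarith
  have hy : y < 1/(2*α+5) := by rwa [lt_div_iff₀ hp]
  have hb := big_bound α hα n hn y (1/(2*α+5)) h0.le hy.le (by rw [div_le_one hp]; linarith)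
  rw [← jacobiPt_eq n α hα] at hb
  refine lt_of_lt_of_le ?_ hb
  rw [jacobiPt_one_eq α hα]
  have h2 : ((2*α+3)*y - 1)/(2*α+2) < ((2*α+3)*(1/(2*α+5)) - 1)/(2*α+2) := by
    apply div_lt_div_of_pos_right _ (by linarith)
    have := mul_lt_mul_of_pos_left hy (show 0 < 2*α+3 by linarith)
    linarith
  refine h2.trans_le ?_
  clear h2 hb hy h1
  obtain ⟨b, hb, rfl⟩ : ∃ b : ℝ, 0 ≤ b ∧ α = b + 1 := ⟨α - 1, by linarith, by ring⟩
  rw [← sub_nonneg]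
  have : b + 1 + 1 ≠ 0 := by positivity
  have : b + 1 + 1 + 1 ≠ 0 := by positivity
  have : b + 1 + 1 + 2 ≠ 0 := by positivity
  have : b + 1 + 1 + 3 ≠ 0 := by positivity
  have : b + 1 + 1 + 4 ≠ 0 := by positivity
  simp only [Finset.sum_range_succ, mom, Finset.prod_range_succ, Nat.choose, Finset.sum_range_zero,
    Finset.prod_range_zero]
  norm_num
  rw [← sub_nonneg]
  field_simp
  rw [← sub_nonneg]
  ring_nf
  positivity

theorem jacobiPt_gt_beta_half (α : ℝ) (hα : 1 ≤ α) (n : ℕ) (hn : 2 ≤ n) (x : ℝ)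
    (hx0 : -1 < x) (hx1 : x < -(2 * α + 3) / (2 * α + 5)) :
    jacobiPt n α (-1/2) x > jacobiPt 1 α (-1/2) x := by
  obtain ⟨y, rfl⟩ : ∃ y, x = 2*y-1 := ⟨(x+1)/2, by ring⟩
  have hy0 : 0 < y := by linarith
  have hp : 0 < 2*α+5 := by linarith
  have hy1 : y * (2*α+5) < 1 := by
    rw [lt_div_iff₀ hp] at hx1
    linarith
  rcases Nat.lt_or_ge n 5 with h | h
  · interval_cases n
    · exact case_two α hα y hy0 hy1
    · exact case_three α hα y hy0 hy1
    · exact case_four α hα y hy0 hy1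
  · exact case_big α hα n h y hy0 hy1
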